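/- In the model Y = Xβ* + ξ with p ≥ n and k* ≤ c·n for an absolute constant c, assume that conditionally on ξ the rows X_i^T of X are i.i.d. N(0,Σ). There exist constants c₁, c₂, c₃ > 0 such that if γ > 0 is small enough, then with probability at least 1 − c₁e^{−c₂n}, the minimum ℓ2-norm interpolator β̂ satisfies min( r̄(γ)², c₃‖ξ‖₂²/n ) ≤ ‖Σ^{1/2}(β̂ − β*)‖₂². -/

import Mathlib

open MeasureTheory ProbabilityTheory Matrix Finset
open scoped ENNReal Classical

noncomputable section

/-- Euclidean (`ℓ2`) norm of a finite real vector. -/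
def enorm2 {m : ℕ} (v : Fin m → ℝ) : ℝ := Real.sqrt (∑ i, v i ^ 2)

/-- The prediction (semi-)norm `‖Σ^{1/2} d‖₂ = √(dᵀ Σ d)`. -/
def predNorm {p : ℕ} (Sig : Matrix (Fin p) (Fin p) ℝ) (d : Fin p → ℝ) : ℝ :=
  Real.sqrt (d ⬝ᵥ Sig.mulVec d)

/-- The standard Gaussian measure `N(0, I_p)` on `ℝ^p`. -/
def stdGaussian (p : ℕ) : Measure (Fin p → ℝ) :=
  Measure.pi fun _ : Fin p => gaussianReal 0 1

/-- `Σ^{1/2} = P Λ^{1/2} Pᵀ` built from the eigendecomposition data. -/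
def covHalf (p : ℕ) (lam : ℕ → ℝ) (Porth : Matrix (Fin p) (Fin p) ℝ) :
    Matrix (Fin p) (Fin p) ℝ :=
  Porth * Matrix.diagonal (fun i : Fin p => Real.sqrt (lam ((i : ℕ) + 1))) * Porthᵀ

/-- The Gaussian law `N(0,Σ)` on `ℝ^p`, realized as the pushforward of `N(0,I_p)`
by `g ↦ Σ^{1/2} g`. -/
def mvGaussian (p : ℕ) (lam : ℕ → ℝ) (Porth : Matrix (Fin p) (Fin p) ℝ) :
    Measure (Fin p → ℝ) :=
  Measure.map (fun g => (covHalf p lam Porth).mulVec g) (stdGaussian p)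

/-- `r_k(Σ) = ∑_{i=k}^p λ_i(Σ)` (eigenvalues `1`-indexed). -/
def rsum (p : ℕ) (lam : ℕ → ℝ) (k : ℕ) : ℝ := ∑ i ∈ Finset.Icc k p, lam i

/-- The set `{k ∈ {1,…,p} : r_k(Σ)/λ_k(Σ) ≥ c₀ n}`. -/
def kstarSet (p : ℕ) (lam : ℕ → ℝ) (c0 : ℝ) (n : ℕ) : Set ℕ :=
  {k | 1 ≤ k ∧ k ≤ p ∧ c0 * n ≤ rsum p lam k / lam k}

/-- `k* = inf { k ∈ {1,…,p} : r_k(Σ)/λ_k(Σ) ≥ c₀ n }`. -/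
def kstar (p : ℕ) (lam : ℕ → ℝ) (c0 : ℝ) (n : ℕ) : ℕ := sInf (kstarSet p lam c0 n)

/-- `ρ = ‖β*‖₂ + 4‖ξ‖₂/√(r_{k*}(Σ))`. -/
def rho (p : ℕ) (lam : ℕ → ℝ) (c0 : ℝ) (n : ℕ) (βstar : Fin p → ℝ) (ξnorm : ℝ) : ℝ :=
  enorm2 βstar + 4 * ξnorm / Real.sqrt (rsum p lam (kstar p lam c0 n))

/-- `r*(η) = inf { r > 0 : ∑ᵢ min(λ_i(Σ), r²) ≤ η n r² }`. -/
def rstar (p n : ℕ) (lam : ℕ → ℝ) (η : ℝ) : ℝ :=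
  sInf {r : ℝ | 0 < r ∧ ∑ i : Fin p, min (lam ((i : ℕ) + 1)) (r ^ 2) ≤ η * n * r ^ 2}

/-- `r̄(γ) = sup { r > 0 : ∑ᵢ min(λ_i(Σ)ρ², r²) ≤ γ ‖ξ‖₂² }`. -/
def rbar (p : ℕ) (lam : ℕ → ℝ) (γ ρ ξnorm : ℝ) : ℝ :=
  sSup {r : ℝ | 0 < r ∧ ∑ i : Fin p, min (lam ((i : ℕ) + 1) * ρ ^ 2) (r ^ 2) ≤ γ * ξnorm ^ 2}

/-- `k̄ = inf { k ≥ k* : r_k(Σ) ≤ (γ/2) r_{k*}(Σ) }`, with `k̄ = p+1` if the set is empty. -/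
def kbar (p : ℕ) (lam : ℕ → ℝ) (c0 : ℝ) (n : ℕ) (γ : ℝ) : ℕ :=
  if _h : {k | kstar p lam c0 n ≤ k ∧
      rsum p lam k ≤ γ / 2 * rsum p lam (kstar p lam c0 n)}.Nonempty
  then sInf {k | kstar p lam c0 n ≤ k ∧
      rsum p lam k ≤ γ / 2 * rsum p lam (kstar p lam c0 n)}
  else p + 1

/-- `b` is a minimum `ℓ2`-norm interpolator for the design `M` and responses `Y`. -/
def IsMinInterp {n p : ℕ} (M : Fin n → Fin p → ℝ) (Y : Fin n → ℝ) (b : Fin p → ℝ) : Prop :=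
  (∀ i, ∑ j, M i j * b j = Y i) ∧
    ∀ b' : Fin p → ℝ, (∀ i, ∑ j, M i j * b' j = Y i) → enorm2 b ≤ enorm2 b'

/-! ### Concentration of weighted sums of squared Gaussians -/

lemma integral_exp_mul_sq_gaussianReal {t : ℝ} (ht : t < 1 / 2) :
    ∫ x, Real.exp (t * x ^ 2) ∂(gaussianReal 0 1) = (Real.sqrt (1 - 2 * t))⁻¹ := by
  rw [integral_gaussianReal_eq_integral_smul one_ne_zero]
  have h : ∀ x : ℝ, gaussianPDFReal 0 1 x • Real.exp (t * x ^ 2)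
      = (Real.sqrt (2 * Real.pi))⁻¹ * Real.exp (-(1 / 2 - t) * x ^ 2) := by
    intro x
    simp only [gaussianPDFReal, smul_eq_mul, NNReal.coe_one, mul_one, sub_zero, mul_assoc,
      ← Real.exp_add]
    congr 2
    ring
  simp_rw [h]
  rw [integral_const_mul, integral_gaussian, ← Real.sqrt_inv, ← Real.sqrt_inv,
    ← Real.sqrt_mul (by positivity)]
  congr 1
  have := Real.pi_pos.ne'
  have h1 : (1 / 2 - t) ≠ 0 := by linarith
  have h2 : (1 - 2 * t) ≠ 0 := by linarith
  rw [show 1 / 2 - t = (1 - 2 * t) / 2 by ring]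
  field_simp

lemma integrable_exp_mul_sq_gaussianReal {t : ℝ} (ht : t < 1 / 2) :
    Integrable (fun x : ℝ => Real.exp (t * x ^ 2)) (gaussianReal 0 1) := by
  by_contra h
  have h1 := integral_exp_mul_sq_gaussianReal ht
  rw [integral_undef h] at h1
  have : 0 < (Real.sqrt (1 - 2 * t))⁻¹ := inv_pos.2 (Real.sqrt_pos.2 (by linarith))
  linarith

lemma inv_sqrt_le_exp_of_inv_le {x y : ℝ} (hx : 0 < x) (h : 1 ≤ x * Real.exp (2 * y)) :
    (Real.sqrt x)⁻¹ ≤ Real.exp y := by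
  have hs : 0 < Real.sqrt x := Real.sqrt_pos.2 hx
  rw [inv_le_iff_one_le_mul₀ hs]
  have h2 : Real.exp y * Real.sqrt x = Real.sqrt (x * Real.exp (2 * y)) := by
    rw [Real.sqrt_mul hx.le, show (2 : ℝ) * y = y + y by ring, Real.exp_add,
      Real.sqrt_mul_self (Real.exp_pos y).le, mul_comm]
  rw [h2]
  exact Real.one_le_sqrt.2 h

lemma integral_exp_mul_sq_gaussianReal_le {t : ℝ} (h0 : 0 ≤ t) (ht : t ≤ 1 / 4) :
    ∫ x, Real.exp (t * x ^ 2) ∂(gaussianReal 0 1) ≤ Real.exp (2 * t) := by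
  rw [integral_exp_mul_sq_gaussianReal (by linarith)]
  refine inv_sqrt_le_exp_of_inv_le (by linarith) ?_
  have := Real.add_one_le_exp (2 * (2 * t))
  nlinarith

lemma integral_exp_neg_mul_sq_gaussianReal_le {t : ℝ} (h0 : 0 ≤ t) (ht : t ≤ 1 / 8) :
    ∫ x, Real.exp (-t * x ^ 2) ∂(gaussianReal 0 1) ≤ Real.exp (-(3 / 4 * t)) := by
  rw [integral_exp_mul_sq_gaussianReal (by linarith)]
  refine inv_sqrt_le_exp_of_inv_le (by linarith) ?_
  have := Real.add_one_le_exp (2 * -(3 / 4 * t))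
  nlinarith

section WeightedChiSquare

variable {p : ℕ} {w : Fin p → ℝ}

lemma mgf_weighted_sq (w : Fin p → ℝ) (s : ℝ) :
    mgf (fun g : Fin p → ℝ => ∑ i, w i * g i ^ 2) (Measure.pi fun _ => gaussianReal 0 1) s
      = ∏ i, ∫ x, Real.exp (s * w i * x ^ 2) ∂(gaussianReal 0 1) := by
  rw [mgf, ← integral_fintype_prod_eq_prod (fun i x => Real.exp (s * w i * x ^ 2))]
  simp_rw [← Real.exp_sum, Finset.mul_sum, mul_assoc]

lemma integrable_exp_weighted_sq {s : ℝ} (h : ∀ i, s * w i < 1 / 2) :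
    Integrable (fun g : Fin p → ℝ => Real.exp (s * ∑ i, w i * g i ^ 2))
      (Measure.pi fun _ => gaussianReal 0 1) := by
  have := Integrable.fintype_prod (fun i => integrable_exp_mul_sq_gaussianReal (h i))
  simpa only [← Real.exp_sum, Finset.mul_sum, mul_assoc] using this

lemma weighted_sq_upper_tail {L S T : ℝ} (hL : 0 ≤ L) (h0 : ∀ i, 0 ≤ w i) (hw : ∀ i, w i ≤ L)
    (hS : ∑ i, w i ≤ S) :
    (Measure.pi fun _ : Fin p => gaussianReal 0 1).real
      {g | 2 * S + 4 * L * T < ∑ i, w i * g i ^ 2} ≤ Real.exp (-T) := by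
  rcases hL.eq_or_lt with rfl | hL
  · have hw0 : ∀ i, w i = 0 := fun i => le_antisymm (hw i) (h0 i)
    have hS0 : 0 ≤ S := (Finset.sum_nonneg fun i _ => h0 i).trans hS
    have hempty : {g : Fin p → ℝ | 2 * S + 4 * 0 * T < ∑ i, w i * g i ^ 2} = ∅ :=
      Set.eq_empty_of_forall_notMem fun g hg => by
        simp only [hw0, Set.mem_ofPred_eq, zero_mul, Finset.sum_const_zero] at hg
        linarith
    rw [hempty, measureReal_empty]
    exact (Real.exp_pos _).le
  have hs : ∀ i, (4 * L)⁻¹ * w i ≤ 1 / 4 := fun i => by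
    rw [inv_mul_le_iff₀ (by positivity)]; linarith [hw i]
  have hsub : {g : Fin p → ℝ | 2 * S + 4 * L * T < ∑ i, w i * g i ^ 2}
      ⊆ {g | 2 * S + 4 * L * T ≤ ∑ i, w i * g i ^ 2} := fun g hg => by
    simp only [Set.mem_ofPred_eq] at hg ⊢
    exact hg.le
  refine (measureReal_mono hsub).trans ?_
  refine (measure_ge_le_exp_mul_mgf (t := (4 * L)⁻¹) _ (by positivity)
    (integrable_exp_weighted_sq fun i => by linarith [hs i])).trans ?_
  rw [mgf_weighted_sq]
  calc _ ≤ Real.exp (-(4 * L)⁻¹ * (2 * S + 4 * L * T))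
        * ∏ i, Real.exp (2 * ((4 * L)⁻¹ * w i)) := by
        refine mul_le_mul_of_nonneg_left (Finset.prod_le_prod
          (fun i _ => integral_nonneg fun x => (Real.exp_pos _).le) fun i _ => ?_)
          (Real.exp_pos _).le
        exact integral_exp_mul_sq_gaussianReal_le (mul_nonneg (by positivity) (h0 i)) (hs i)
    _ = Real.exp (-T + 2 * (4 * L)⁻¹ * (∑ i, w i - S)) := by
        rw [← Real.exp_sum, ← Real.exp_add, ← Finset.mul_sum, ← Finset.mul_sum]
        congr 1
        field_simp
        ring
    _ ≤ _ := by
        apply Real.exp_le_exp.2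
        have : 0 < (4 * L)⁻¹ := by positivity
        nlinarith

lemma weighted_sq_lower_tail {L : ℝ} (hL : 0 < L) (h0 : ∀ i, 0 ≤ w i) (hw : ∀ i, w i ≤ L) :
    (Measure.pi fun _ : Fin p => gaussianReal 0 1).real
      {g | ∑ i, w i * g i ^ 2 ≤ (∑ i, w i) / 2} ≤ Real.exp (-((∑ i, w i) / (32 * L))) := by
  have hs : ∀ i, (8 * L)⁻¹ * w i ≤ 1 / 8 := fun i => by
    rw [inv_mul_le_iff₀ (by positivity)]; linarith [hw i]
  have hs0 : ∀ i, 0 ≤ (8 * L)⁻¹ * w i := fun i => mul_nonneg (by positivity) (h0 i)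
  have hsneg : -(8 * L)⁻¹ ≤ 0 := neg_nonpos.2 (by positivity)
  refine (measure_le_le_exp_mul_mgf (t := -(8 * L)⁻¹) _ hsneg
    (integrable_exp_weighted_sq fun i => by linarith [hs0 i])).trans ?_
  rw [mgf_weighted_sq]
  calc _ ≤ Real.exp (- -(8 * L)⁻¹ * ((∑ i, w i) / 2))
        * ∏ i, Real.exp (-(3 / 4 * ((8 * L)⁻¹ * w i))) := by
        refine mul_le_mul_of_nonneg_left (Finset.prod_le_prod
          (fun i _ => integral_nonneg fun x => (Real.exp_pos _).le) fun i _ => ?_)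
          (Real.exp_pos _).le
        simpa only [neg_mul] using integral_exp_neg_mul_sq_gaussianReal_le (hs0 i) (hs i)
    _ = _ := by
        rw [← Real.exp_sum, ← Real.exp_add, Finset.sum_neg_distrib, ← Finset.mul_sum,
          ← Finset.mul_sum]
        congr 1
        field_simp
        ring

end WeightedChiSquare

/-! ### Linear combinations of independent standard Gaussian vectors -/

lemma map_sum_smul_pi_stdGaussian {n p : ℕ} (u : EuclideanSpace ℝ (Fin n)) :
    (Measure.pi fun _ : Fin n => _root_.stdGaussian p).map
        (fun g => WithLp.toLp 2 (∑ a, u a • g a))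
      = (ProbabilityTheory.stdGaussian (EuclideanSpace ℝ (Fin p))).map (fun z => ‖u‖ • z) := by
  have hpr : ∀ a, IsProbabilityMeasure ((ProbabilityTheory.stdGaussian
      (EuclideanSpace ℝ (Fin p))).map (fun z => u a • z)) := fun a =>
    Measure.isProbabilityMeasure_map (by fun_prop)
  have hlaw : (Measure.pi fun _ : Fin n => _root_.stdGaussian p).map
        (fun g (a : Fin n) => u a • (WithLp.toLp 2 (g a) : EuclideanSpace ℝ (Fin p)))
      = Measure.pi fun a => (ProbabilityTheory.stdGaussian (EuclideanSpace ℝ (Fin p))).map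
          (fun z => u a • z) := by
    have hm : ∀ a : Fin n, (_root_.stdGaussian p).map
        (fun g => u a • (WithLp.toLp 2 g : EuclideanSpace ℝ (Fin p)))
        = (ProbabilityTheory.stdGaussian (EuclideanSpace ℝ (Fin p))).map (fun z => u a • z) := by
      intro a
      rw [← map_pi_eq_stdGaussian, Measure.map_map (by fun_prop) (by fun_prop)]
      rfl
    have hσ : ∀ a : Fin n, SigmaFinite ((_root_.stdGaussian p).map
        (fun g => u a • (WithLp.toLp 2 g : EuclideanSpace ℝ (Fin p)))) := fun a => by
      rw [hm a]
      have := hpr a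
      infer_instance
    rw [Measure.pi_map_pi (μ := fun _ : Fin n => _root_.stdGaussian p)
      (f := fun (a : Fin n) g => u a • (WithLp.toLp 2 g : EuclideanSpace ℝ (Fin p)))
      (fun a => by fun_prop)]
    simp_rw [hm]
  have hsum : (fun g : Fin n → Fin p → ℝ => (WithLp.toLp 2 (∑ a, u a • g a) :
      EuclideanSpace ℝ (Fin p))) = (fun y : Fin n → EuclideanSpace ℝ (Fin p) => ∑ a, y a) ∘
        (fun g (a : Fin n) => u a • (WithLp.toLp 2 (g a) : EuclideanSpace ℝ (Fin p))) := by
    funext g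
    simp [WithLp.toLp_sum]
  rw [hsum, ← Measure.map_map (by fun_prop) (by fun_prop), hlaw]
  refine Measure.ext_of_charFun ?_
  rw [charFun_map_sum_pi_eq_prod]
  funext t
  rw [Finset.prod_apply]
  simp_rw [charFun_map_smul, charFun_stdGaussian, ← Complex.exp_sum, norm_smul]
  congr 1
  norm_cast
  simp_rw [mul_pow, norm_norm, EuclideanSpace.norm_sq_eq u, Finset.sum_mul]
  rw [← Finset.sum_div, Finset.sum_neg_distrib]

/-- The coordinates of `xᵀ u` in the eigenbasis given by the columns of `Q`. -/
def rotScore {n p : ℕ} (Q : Matrix (Fin p) (Fin p) ℝ) (x : Fin n → Fin p → ℝ)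
    (u : EuclideanSpace ℝ (Fin n)) : Fin p → ℝ :=
  Qᵀ *ᵥ ∑ a, u a • x a

section Score

variable {n p : ℕ} {lam : ℕ → ℝ} {Q : Matrix (Fin p) (Fin p) ℝ}

lemma measurable_rotScore (Q : Matrix (Fin p) (Fin p) ℝ) (u : EuclideanSpace ℝ (Fin n)) :
    Measurable fun x : Fin n → Fin p → ℝ => rotScore Q x u := by
  unfold rotScore
  refine Continuous.measurable ?_
  fun_prop

lemma sum_sq_transpose_mulVec (hQ : Q * Qᵀ = 1) (d : Fin p → ℝ) :
    ∑ i, (Qᵀ *ᵥ d) i ^ 2 = ∑ i, d i ^ 2 := by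
  have h : ∀ v : Fin p → ℝ, ∑ i, v i ^ 2 = v ⬝ᵥ v := fun v => by simp [dotProduct, sq]
  rw [h, h, Matrix.dotProduct_mulVec, Matrix.vecMul_transpose, Matrix.mulVec_mulVec, hQ,
    Matrix.one_mulVec]

lemma map_transpose_stdGaussian (hQ : Q * Qᵀ = 1) :
    (ProbabilityTheory.stdGaussian (EuclideanSpace ℝ (Fin p))).map
        (fun z => WithLp.toLp 2 (Qᵀ *ᵥ z.ofLp))
      = ProbabilityTheory.stdGaussian (EuclideanSpace ℝ (Fin p)) := by
  let f : EuclideanSpace ℝ (Fin p) →ₗᵢ[ℝ] EuclideanSpace ℝ (Fin p) :=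
    { toLinearMap := Matrix.toEuclideanLin Qᵀ
      norm_map' := fun z => by
        rw [EuclideanSpace.norm_eq, EuclideanSpace.norm_eq]
        simpa using congrArg Real.sqrt (sum_sq_transpose_mulVec hQ z.ofLp) }
  exact stdGaussian_map (f.toLinearIsometryEquiv rfl)

instance (p : ℕ) : IsProbabilityMeasure (_root_.stdGaussian p) := by
  unfold _root_.stdGaussian
  infer_instance

instance (p : ℕ) (lam : ℕ → ℝ) (Q : Matrix (Fin p) (Fin p) ℝ) :
    IsProbabilityMeasure (mvGaussian p lam Q) :=
  Measure.isProbabilityMeasure_map (Continuous.aemeasurable (by fun_prop))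

lemma map_rotScore (hQ : Q * Qᵀ = 1) (u : EuclideanSpace ℝ (Fin n)) :
    (Measure.pi fun _ : Fin n => mvGaussian p lam Q).map (fun x => rotScore Q x u)
      = (Measure.pi fun _ : Fin p => gaussianReal 0 1).map
          (fun z (i : Fin p) => Real.sqrt (lam ((i : ℕ) + 1)) * (‖u‖ * z i)) := by
  have hpi : (Measure.pi fun _ : Fin n => mvGaussian p lam Q)
      = (Measure.pi fun _ : Fin n => _root_.stdGaussian p).map
          (fun g a => covHalf p lam Q *ᵥ g a) := by
    have : ∀ a : Fin n, SigmaFinite ((_root_.stdGaussian p).map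
        (fun g => covHalf p lam Q *ᵥ g)) := fun _ =>
      inferInstanceAs (SigmaFinite (mvGaussian p lam Q))
    rw [Measure.pi_map_pi (μ := fun _ : Fin n => _root_.stdGaussian p)
      (f := fun (_ : Fin n) g => covHalf p lam Q *ᵥ g)
      (fun a => Continuous.aemeasurable (by fun_prop))]
    rfl
  have hQ' : Qᵀ * Q = 1 := mul_eq_one_comm.1 hQ
  have hlin : ∀ g : Fin n → Fin p → ℝ, rotScore Q (fun a => covHalf p lam Q *ᵥ g a) u
      = fun i : Fin p => Real.sqrt (lam ((i : ℕ) + 1)) * (Qᵀ *ᵥ ∑ a, u a • g a) i := by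
    intro g
    have h1 : ∑ a, u a • covHalf p lam Q *ᵥ g a = covHalf p lam Q *ᵥ ∑ a, u a • g a := by
      simp_rw [← Matrix.mulVec_smul]
      exact (map_sum (Matrix.mulVecLin (covHalf p lam Q)) _ _).symm
    rw [rotScore, h1, Matrix.mulVec_mulVec, covHalf, ← Matrix.mul_assoc, ← Matrix.mul_assoc, hQ',
      Matrix.one_mul, ← Matrix.mulVec_mulVec]
    funext i
    rw [Matrix.mulVec_diagonal]
  let F : EuclideanSpace ℝ (Fin p) → Fin p → ℝ :=
    fun z i => Real.sqrt (lam ((i : ℕ) + 1)) * z.ofLp i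
  let R : EuclideanSpace ℝ (Fin p) → EuclideanSpace ℝ (Fin p) :=
    fun z => WithLp.toLp 2 (Qᵀ *ᵥ z.ofLp)
  have hF : Measurable F := Continuous.measurable (by fun_prop)
  have hR : Measurable R := Continuous.measurable (by fun_prop)
  calc _ = (((Measure.pi fun _ : Fin n => _root_.stdGaussian p).map
          (fun g => (WithLp.toLp 2 (∑ a, u a • g a) : EuclideanSpace ℝ (Fin p)))).map R).map F := by
        rw [hpi, Measure.map_map (measurable_rotScore Q u) (Continuous.measurable (by fun_prop)),
          Measure.map_map hR (by fun_prop), Measure.map_map hF (hR.comp (by fun_prop))]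
        congr 1
        funext g
        exact hlin g
    _ = ((ProbabilityTheory.stdGaussian (EuclideanSpace ℝ (Fin p))).map R).map
          (F ∘ fun z => ‖u‖ • z) := by
        rw [map_sum_smul_pi_stdGaussian, Measure.map_map hR (by fun_prop),
          Measure.map_map hF (by fun_prop), Measure.map_map (by fun_prop) hR]
        congr 1
        funext z i
        simp [F, R, Matrix.mulVec_smul]
    _ = _ := by
        rw [map_transpose_stdGaussian hQ, ← map_pi_eq_stdGaussian,
          Measure.map_map (by fun_prop) (by fun_prop)]
        rfl

lemma rotScore_upper_tail (hQ : Q * Qᵀ = 1) (hlam : ∀ i : Fin p, 0 ≤ lam ((i : ℕ) + 1))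
    {u : EuclideanSpace ℝ (Fin n)} (hu : ‖u‖ ≤ 1) {v : Fin p → ℝ} (hv : ∀ i, 0 ≤ v i)
    {L S T : ℝ} (hL : 0 ≤ L) (hvL : ∀ i : Fin p, v i * lam ((i : ℕ) + 1) ≤ L)
    (hS : ∑ i : Fin p, v i * lam ((i : ℕ) + 1) ≤ S) :
    (Measure.pi fun _ : Fin n => mvGaussian p lam Q).real
      {x | 2 * S + 4 * L * T < ∑ i, v i * rotScore Q x u i ^ 2} ≤ Real.exp (-T) := by
  have hu2 : ‖u‖ ^ 2 ≤ 1 := pow_le_one₀ (norm_nonneg u) hu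
  have hw0 : ∀ i : Fin p, 0 ≤ v i * lam ((i : ℕ) + 1) := fun i => mul_nonneg (hv i) (hlam i)
  have hw : ∀ i : Fin p, v i * lam ((i : ℕ) + 1) * ‖u‖ ^ 2 ≤ v i * lam ((i : ℕ) + 1) :=
    fun i => mul_le_of_le_one_right (hw0 i) hu2
  have key := weighted_sq_upper_tail (w := fun i : Fin p => v i * lam ((i : ℕ) + 1) * ‖u‖ ^ 2)
    (T := T) hL (fun i => mul_nonneg (hw0 i) (by positivity)) (fun i => (hw i).trans (hvL i))
    ((Finset.sum_le_sum fun i _ => hw i).trans hS)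
  have hset : MeasurableSet {y : Fin p → ℝ | 2 * S + 4 * L * T < ∑ i, v i * y i ^ 2} :=
    measurableSet_lt measurable_const (by fun_prop)
  have h := congrArg (fun m : Measure (Fin p → ℝ) => m.real {y : Fin p → ℝ | 2 * S + 4 * L * T < ∑ i, v i * y i ^ 2})
    (map_rotScore (lam := lam) hQ u)
  simp only [map_measureReal_apply (measurable_rotScore Q u) hset] at h
  rw [map_measureReal_apply (by fun_prop) hset] at h
  refine (h.trans ?_).trans_le key
  congr 1
  ext z
  simp [mul_pow, Real.sq_sqrt (hlam _), mul_assoc]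

lemma rotScore_lower_tail (hQ : Q * Qᵀ = 1) (hlam : ∀ i : Fin p, 0 ≤ lam ((i : ℕ) + 1))
    {u : EuclideanSpace ℝ (Fin n)} (hu : 0 < ‖u‖) {v : Fin p → ℝ} (hv : ∀ i, 0 ≤ v i)
    {L : ℝ} (hL : 0 < L) (hvL : ∀ i : Fin p, v i * lam ((i : ℕ) + 1) ≤ L) :
    (Measure.pi fun _ : Fin n => mvGaussian p lam Q).real
      {x | ∑ i, v i * rotScore Q x u i ^ 2
        ≤ (∑ i : Fin p, v i * lam ((i : ℕ) + 1)) * ‖u‖ ^ 2 / 2}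
      ≤ Real.exp (-((∑ i : Fin p, v i * lam ((i : ℕ) + 1)) / (32 * L))) := by
  have hw0 : ∀ i : Fin p, 0 ≤ v i * lam ((i : ℕ) + 1) := fun i => mul_nonneg (hv i) (hlam i)
  have key := weighted_sq_lower_tail (w := fun i : Fin p => v i * lam ((i : ℕ) + 1) * ‖u‖ ^ 2)
    (L := L * ‖u‖ ^ 2) (by positivity) (fun i => mul_nonneg (hw0 i) (by positivity))
    (fun i => mul_le_mul_of_nonneg_right (hvL i) (by positivity))
  rw [← Finset.sum_mul, show (32 : ℝ) * (L * ‖u‖ ^ 2) = 32 * L * ‖u‖ ^ 2 by ring,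
    mul_div_mul_right _ _ (by positivity)] at key
  have hset : MeasurableSet {y : Fin p → ℝ | ∑ i, v i * y i ^ 2
      ≤ (∑ i : Fin p, v i * lam ((i : ℕ) + 1)) * ‖u‖ ^ 2 / 2} :=
    measurableSet_le (by fun_prop) measurable_const
  have h := congrArg (fun m : Measure (Fin p → ℝ) => m.real {y : Fin p → ℝ | ∑ i, v i * y i ^ 2
      ≤ (∑ i : Fin p, v i * lam ((i : ℕ) + 1)) * ‖u‖ ^ 2 / 2})
    (map_rotScore (lam := lam) hQ u)
  simp only [map_measureReal_apply (measurable_rotScore Q u) hset] at h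
  rw [map_measureReal_apply (by fun_prop) hset] at h
  refine (h.trans ?_).trans_le key
  congr 1
  ext z
  simp [mul_pow, Real.sq_sqrt (hlam _), mul_assoc]

end Score

/-! ### Nets of the unit ball -/

lemma exists_half_net (E : Type*) [NormedAddCommGroup E] [NormedSpace ℝ E]
    [FiniteDimensional ℝ E] :
    ∃ N : Finset E, N.card ≤ 5 ^ Module.finrank ℝ E ∧ (∀ v ∈ N, ‖v‖ ≤ 1) ∧
      ∀ u : E, ‖u‖ ≤ 1 → ∃ v ∈ N, ‖u - v‖ ≤ 1 / 2 := by
  let good : Finset E → Prop := fun s => (∀ c ∈ s, ‖c‖ ≤ 2) ∧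
    ∀ c ∈ s, ∀ d ∈ s, c ≠ d → 1 ≤ ‖c - d‖
  have hbdd : BddAbove {m | ∃ s, good s ∧ s.card = m} := by
    refine ⟨5 ^ Module.finrank ℝ E, ?_⟩
    rintro m ⟨s, hs, rfl⟩
    exact Besicovitch.card_le_of_separated s hs.1 hs.2
  have hne : {m | ∃ s, good s ∧ s.card = m}.Nonempty := ⟨0, ∅, by simp [good], rfl⟩
  obtain ⟨s, hs, hcard⟩ := Nat.sSup_mem hne hbdd
  refine ⟨s.image fun c => (1 / 2 : ℝ) • c,
    Finset.card_image_le.trans (Besicovitch.card_le_of_separated s hs.1 hs.2), ?_, ?_⟩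
  · intro v hv
    obtain ⟨c, hc, rfl⟩ := Finset.mem_image.1 hv
    rw [norm_smul]
    norm_num
    linarith [hs.1 c hc]
  · intro u hu
    by_contra! hcon
    have hfar : ∀ c ∈ s, 1 ≤ ‖(2 : ℝ) • u - c‖ := by
      intro c hc
      have h1 := hcon _ (Finset.mem_image_of_mem _ hc)
      have h2 : (2 : ℝ) • u - c = (2 : ℝ) • (u - (1 / 2 : ℝ) • c) := by
        rw [smul_sub, smul_smul]
        norm_num
      rw [h2, norm_smul]
      norm_num
      linarith
    have hnot : (2 : ℝ) • u ∉ s := fun h => by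
      have := hfar _ h
      simp at this
      linarith
    have hgood : good (insert ((2 : ℝ) • u) s) := by
      constructor
      · intro c hc
        rcases Finset.mem_insert.1 hc with rfl | hc
        · rw [norm_smul]
          norm_num
          linarith
        · exact hs.1 c hc
      · intro c hc d hd hcd
        rcases Finset.mem_insert.1 hc with rfl | hc <;> rcases Finset.mem_insert.1 hd with rfl | hd
        · exact absurd rfl hcd
        · exact hfar d hd
        · rw [norm_sub_rev]
          exact hfar c hc
        · exact hs.2 c hc d hd hcd
    have := le_csSup hbdd ⟨_, hgood, rfl⟩
    rw [← hcard, Finset.card_insert_of_notMem hnot] at this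
    omega

lemma exists_dyadic_net (E : Type*) [NormedAddCommGroup E] [NormedSpace ℝ E]
    [FiniteDimensional ℝ E] (m : ℕ) :
    ∃ N : Finset E, N.card ≤ (5 ^ Module.finrank ℝ E) ^ m ∧
      ∀ u : E, ‖u‖ ≤ 1 → ∃ v ∈ N, ‖u - v‖ ≤ (1 / 2) ^ m := by
  induction m with
  | zero => exact ⟨{0}, by simp, fun u hu => ⟨0, by simp, by simpa using hu⟩⟩
  | succ m ih =>
    obtain ⟨M, hM, hMnet⟩ := ih
    obtain ⟨N, hN, -, hNnet⟩ := exists_half_net E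
    refine ⟨Finset.image₂ (fun a b => a + ((1 / 2 : ℝ) ^ m) • b) M N, ?_, ?_⟩
    · refine (Finset.card_image₂_le _ _ _).trans ?_
      rw [pow_succ]
      exact Nat.mul_le_mul hM hN
    · intro u hu
      obtain ⟨a, ha, hua⟩ := hMnet u hu
      have h2 : (0 : ℝ) < 2 ^ m := by positivity
      obtain ⟨b, hb, hub⟩ := hNnet ((2 : ℝ) ^ m • (u - a)) (by
        rw [norm_smul, Real.norm_of_nonneg h2.le]
        calc (2 : ℝ) ^ m * ‖u - a‖ ≤ 2 ^ m * (1 / 2) ^ m := by gcongr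
          _ = 1 := by rw [← mul_pow]; norm_num)
      refine ⟨_, Finset.mem_image₂_of_mem ha hb, ?_⟩
      have h3 : u - (a + ((1 / 2 : ℝ) ^ m) • b)
          = ((1 / 2 : ℝ) ^ m) • ((2 : ℝ) ^ m • (u - a) - b) := by
        rw [smul_sub, smul_smul, ← mul_pow]
        norm_num
        abel
      rw [h3, norm_smul, Real.norm_of_nonneg (by positivity), pow_succ]
      gcongr

lemma opNorm_le_of_half_net {E F : Type*} [NormedAddCommGroup E] [NormedSpace ℝ E]
    [NormedAddCommGroup F] [NormedSpace ℝ F] {N : Finset E}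
    (hN : ∀ u : E, ‖u‖ ≤ 1 → ∃ v ∈ N, ‖u - v‖ ≤ 1 / 2)
    (A : E →L[ℝ] F) {B : ℝ} (hB : 0 ≤ B) (h : ∀ v ∈ N, ‖A v‖ ≤ B) : ‖A‖ ≤ 2 * B := by
  have key : ‖A‖ ≤ B + ‖A‖ / 2 := by
    refine A.opNorm_le_of_unit_norm (by positivity) fun u hu => ?_
    obtain ⟨v, hv, huv⟩ := hN u hu.le
    calc ‖A u‖ = ‖A v + A (u - v)‖ := by rw [← map_add]; simp
      _ ≤ ‖A v‖ + ‖A (u - v)‖ := norm_add_le _ _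
      _ ≤ B + ‖A‖ * (1 / 2) := by
        gcongr
        · exact h v hv
        · exact (A.le_opNorm _).trans (by gcongr)
      _ = _ := by ring
  linarith

/-! ### Uniform bounds for the scores -/

section Uniform

variable {n p : ℕ} {lam : ℕ → ℝ} {Q : Matrix (Fin p) (Fin p) ℝ}

/-- The map `u ↦ (√vᵢ (Qᵀ xᵀ u)ᵢ)ᵢ` between Euclidean spaces. -/
def scoreMap (Q : Matrix (Fin p) (Fin p) ℝ) (v : Fin p → ℝ) (x : Fin n → Fin p → ℝ) :
    EuclideanSpace ℝ (Fin n) →L[ℝ] EuclideanSpace ℝ (Fin p) :=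
  LinearMap.toContinuousLinearMap
    { toFun := fun u => WithLp.toLp 2 fun i => Real.sqrt (v i) * rotScore Q x u i
      map_add' := fun u u' => by
        ext i
        simp [rotScore, add_smul, Finset.sum_add_distrib, Matrix.mulVec_add, mul_add]
      map_smul' := fun c u => by
        ext i
        simp only [rotScore, PiLp.smul_apply, smul_eq_mul, mul_smul, ← Finset.smul_sum,
          Matrix.mulVec_smul, Pi.smul_apply, RingHom.id_apply]
        ring }

lemma norm_sq_scoreMap {v : Fin p → ℝ} (hv : ∀ i, 0 ≤ v i) (x : Fin n → Fin p → ℝ)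
    (u : EuclideanSpace ℝ (Fin n)) :
    ‖scoreMap Q v x u‖ ^ 2 = ∑ i, v i * rotScore Q x u i ^ 2 := by
  rw [EuclideanSpace.real_norm_sq_eq]
  refine Finset.sum_congr rfl fun i _ => ?_
  change (Real.sqrt (v i) * rotScore Q x u i) ^ 2 = _
  rw [mul_pow, Real.sq_sqrt (hv i)]

lemma five_pow_le_exp (m : ℕ) : (5 : ℝ) ^ m ≤ Real.exp (2 * m) := by
  have h5 : (5 : ℝ) ≤ Real.exp 2 := by
    have h := Real.exp_one_gt_d9
    rw [show (2 : ℝ) = 1 + 1 by norm_num, Real.exp_add]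
    nlinarith
  calc (5 : ℝ) ^ m ≤ Real.exp 2 ^ m := by gcongr
    _ = _ := by rw [← Real.exp_nat_mul, mul_comm]

lemma rotScore_uniform_upper (hQ : Q * Qᵀ = 1) (hlam : ∀ i : Fin p, 0 ≤ lam ((i : ℕ) + 1))
    {v : Fin p → ℝ} (hv : ∀ i, 0 ≤ v i) {L S T : ℝ} (hL : 0 ≤ L) (hT : 0 ≤ T)
    (hvL : ∀ i : Fin p, v i * lam ((i : ℕ) + 1) ≤ L)
    (hS : ∑ i : Fin p, v i * lam ((i : ℕ) + 1) ≤ S) :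
    (Measure.pi fun _ : Fin n => mvGaussian p lam Q).real
      {x | ∃ u : EuclideanSpace ℝ (Fin n),
        (8 * S + 16 * L * T) * ‖u‖ ^ 2 < ∑ i, v i * rotScore Q x u i ^ 2}
      ≤ Real.exp (2 * n) * Real.exp (-T) := by
  have hS0 : 0 ≤ S := (Finset.sum_nonneg fun i _ => mul_nonneg (hv i) (hlam i)).trans hS
  obtain ⟨N, hcard, hN1, hN⟩ := exists_half_net (EuclideanSpace ℝ (Fin n))
  rw [finrank_euclideanSpace_fin] at hcard
  have hsub : {x | ∃ u : EuclideanSpace ℝ (Fin n),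
        (8 * S + 16 * L * T) * ‖u‖ ^ 2 < ∑ i, v i * rotScore Q x u i ^ 2}
      ⊆ ⋃ u ∈ N, {x | 2 * S + 4 * L * T < ∑ i, v i * rotScore Q x u i ^ 2} := by
    rintro x ⟨u, hu⟩
    by_contra hx
    simp only [Set.mem_iUnion, Set.mem_ofPred_eq, not_exists, not_lt] at hx
    have hA := opNorm_le_of_half_net hN (scoreMap Q v x) (Real.sqrt_nonneg (2 * S + 4 * L * T))
      fun w hw => Real.le_sqrt_of_sq_le (by rw [norm_sq_scoreMap hv]; exact hx w hw)
    have hu2 : ‖scoreMap Q v x u‖ ≤ 2 * Real.sqrt (2 * S + 4 * L * T) * ‖u‖ :=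
      ((scoreMap Q v x).le_opNorm u).trans (by gcongr)
    have hu3 := pow_le_pow_left₀ (norm_nonneg _) hu2 2
    rw [norm_sq_scoreMap hv, mul_pow, mul_pow, Real.sq_sqrt (by positivity)] at hu3
    linarith
  calc _ ≤ (Measure.pi fun _ : Fin n => mvGaussian p lam Q).real
        (⋃ u ∈ N, {x | 2 * S + 4 * L * T < ∑ i, v i * rotScore Q x u i ^ 2}) :=
        measureReal_mono hsub (measure_ne_top _ _)
    _ ≤ ∑ u ∈ N, (Measure.pi fun _ : Fin n => mvGaussian p lam Q).real
        {x | 2 * S + 4 * L * T < ∑ i, v i * rotScore Q x u i ^ 2} :=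
        measureReal_biUnion_finset_le _ _
    _ ≤ ∑ u ∈ N, Real.exp (-T) :=
        Finset.sum_le_sum fun u hu => rotScore_upper_tail hQ hlam (hN1 u hu) hv hL hvL hS
    _ = N.card * Real.exp (-T) := by simp
    _ ≤ _ := by
        gcongr
        exact le_trans (by exact_mod_cast hcard) (five_pow_le_exp n)

lemma rotScore_uniform_lower (hQ : Q * Qᵀ = 1) (hlam : ∀ i : Fin p, 0 ≤ lam ((i : ℕ) + 1))
    {v : Fin p → ℝ} (hv : ∀ i, 0 ≤ v i) {L S : ℝ} (hL : 0 < L)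
    (hvL : ∀ i : Fin p, v i * lam ((i : ℕ) + 1) ≤ L)
    (hS : ∑ i : Fin p, v i * lam ((i : ℕ) + 1) = S) :
    (Measure.pi fun _ : Fin n => mvGaussian p lam Q).real
      {x | (∃ u : EuclideanSpace ℝ (Fin n),
          ∑ i, v i * rotScore Q x u i ^ 2 < S / 16 * ‖u‖ ^ 2) ∧
        ∀ u : EuclideanSpace ℝ (Fin n), ∑ i, v i * rotScore Q x u i ^ 2 ≤ 9 * S * ‖u‖ ^ 2}
      ≤ Real.exp (8 * n) * Real.exp (-(S / (32 * L))) := by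
  have hS0 : 0 ≤ S := hS ▸ Finset.sum_nonneg fun i _ => mul_nonneg (hv i) (hlam i)
  obtain ⟨N, hcard, hN⟩ := exists_dyadic_net (EuclideanSpace ℝ (Fin n)) 4
  rw [finrank_euclideanSpace_fin] at hcard
  set M := N.filter fun w => 15 / 16 ≤ ‖w‖ with hM
  have hsub : {x | (∃ u : EuclideanSpace ℝ (Fin n),
          ∑ i, v i * rotScore Q x u i ^ 2 < S / 16 * ‖u‖ ^ 2) ∧
        ∀ u : EuclideanSpace ℝ (Fin n), ∑ i, v i * rotScore Q x u i ^ 2 ≤ 9 * S * ‖u‖ ^ 2}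
      ⊆ ⋃ w ∈ M, {x | ∑ i, v i * rotScore Q x w i ^ 2 ≤ S * ‖w‖ ^ 2 / 2} := by
    rintro x ⟨⟨u, hu⟩, hup⟩
    by_contra hx
    simp only [Set.mem_iUnion, Set.mem_ofPred_eq, not_exists, not_le] at hx
    have hu0 : 0 < ‖u‖ := by
      by_contra h
      have h0 : ‖u‖ = 0 := le_antisymm (not_lt.1 h) (norm_nonneg u)
      rw [h0] at hu
      have : 0 ≤ ∑ i, v i * rotScore Q x u i ^ 2 :=
        Finset.sum_nonneg fun i _ => mul_nonneg (hv i) (sq_nonneg _)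
      linarith
    have hup' : ∀ w, ‖scoreMap Q v x w‖ ≤ 3 * Real.sqrt S * ‖w‖ := by
      intro w
      refine abs_le_of_sq_le_sq' ?_ (by positivity) |>.2
      rw [norm_sq_scoreMap hv, mul_pow, mul_pow, Real.sq_sqrt hS0]
      linarith [hup w]
    set e := ‖u‖⁻¹ • u with he
    have he1 : ‖e‖ = 1 := norm_smul_inv_norm (norm_pos_iff.1 hu0)
    have hue : u = ‖u‖ • e := by rw [he, smul_smul, mul_inv_cancel₀ hu0.ne', one_smul]
    obtain ⟨w, hwN, hew⟩ := hN e he1.le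
    have hw : 15 / 16 ≤ ‖w‖ := by
      have := norm_sub_norm_le e w
      norm_num at hew
      linarith
    have hAw : 9 / 16 * Real.sqrt S ≤ ‖scoreMap Q v x w‖ := by
      refine abs_le_of_sq_le_sq' ?_ (norm_nonneg _) |>.2
      rw [norm_sq_scoreMap hv, mul_pow, Real.sq_sqrt hS0]
      have h1 := hx w (Finset.mem_filter.2 ⟨hwN, hw⟩)
      have h2 : (15 / 16 : ℝ) ^ 2 ≤ ‖w‖ ^ 2 := by gcongr
      nlinarith
    have hAe : 1 / 4 * Real.sqrt S ≤ ‖scoreMap Q v x e‖ := by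
      have h1 : scoreMap Q v x e = scoreMap Q v x w - scoreMap Q v x (w - e) := by
        rw [map_sub]; abel
      have h2 := hup' (w - e)
      have h3 := norm_sub_norm_le (scoreMap Q v x w) (scoreMap Q v x (w - e))
      rw [← h1] at h3
      rw [norm_sub_rev] at hew
      norm_num at hew
      have h4 : 3 * Real.sqrt S * ‖w - e‖ ≤ 3 * Real.sqrt S * (1 / 16) := by gcongr
      have := Real.sqrt_nonneg S
      linarith
    have hfin : 1 / 4 * Real.sqrt S * ‖u‖ ≤ ‖scoreMap Q v x u‖ := by
      have h1 : ‖scoreMap Q v x u‖ = ‖u‖ * ‖scoreMap Q v x e‖ := by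
        conv_lhs => rw [hue]
        rw [map_smul, norm_smul, norm_norm]
      rw [h1, mul_comm ‖u‖]
      gcongr
    have hfin2 := pow_le_pow_left₀ (by positivity) hfin 2
    rw [norm_sq_scoreMap hv, mul_pow, mul_pow, Real.sq_sqrt hS0] at hfin2
    linarith
  calc _ ≤ (Measure.pi fun _ : Fin n => mvGaussian p lam Q).real
        (⋃ w ∈ M, {x | ∑ i, v i * rotScore Q x w i ^ 2 ≤ S * ‖w‖ ^ 2 / 2}) :=
        measureReal_mono hsub (measure_ne_top _ _)
    _ ≤ ∑ w ∈ M, (Measure.pi fun _ : Fin n => mvGaussian p lam Q).real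
        {x | ∑ i, v i * rotScore Q x w i ^ 2 ≤ S * ‖w‖ ^ 2 / 2} :=
        measureReal_biUnion_finset_le _ _
    _ ≤ ∑ w ∈ M, Real.exp (-(S / (32 * L))) := by
        refine Finset.sum_le_sum fun w hw => ?_
        have hw0 : 0 < ‖w‖ := by linarith [(Finset.mem_filter.1 hw).2]
        have := rotScore_lower_tail (n := n) (lam := lam) hQ hlam hw0 hv hL hvL
        rwa [hS] at this
    _ = M.card * Real.exp (-(S / (32 * L))) := by simp
    _ ≤ _ := by
        gcongr
        have h1 : M.card ≤ 5 ^ (n * 4) :=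
          (Finset.card_filter_le _ _).trans (hcard.trans_eq (pow_mul 5 n 4).symm)
        refine le_trans (by exact_mod_cast h1) ((five_pow_le_exp (n * 4)).trans_eq ?_)
        congr 1
        push_cast
        ring

end Uniform

/-! ### Good designs -/

section Good

variable {n p : ℕ} {lam : ℕ → ℝ} {Q : Matrix (Fin p) (Fin p) ℝ}

/-- Indicator of the coordinates of (zero-based) index at least `k`. -/
def tailInd (p k : ℕ) (i : Fin p) : ℝ := if k ≤ (i : ℕ) then 1 else 0

/-- Reciprocals of the eigenvalues of (zero-based) index below `k`. -/
def headInv (p : ℕ) (lam : ℕ → ℝ) (k : ℕ) (i : Fin p) : ℝ :=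
  if (i : ℕ) < k then (lam ((i : ℕ) + 1))⁻¹ else 0

/-- Sum of the eigenvalues of (zero-based) index at least `k`. -/
def tailSum (p : ℕ) (lam : ℕ → ℝ) (k : ℕ) : ℝ := ∑ i : Fin p, tailInd p k i * lam ((i : ℕ) + 1)

/-- The largest eigenvalue of (zero-based) index at least `k`. -/
def tailTop (p : ℕ) (lam : ℕ → ℝ) (k : ℕ) : ℝ := if k < p then lam (k + 1) else 0

/-- Operator-norm bounds for all whitened heads and all tails of the design, together with a lower
bound for the tail starting at `κ`. -/
structure IsGoodDesign (lam : ℕ → ℝ) (Q : Matrix (Fin p) (Fin p) ℝ) (κ : ℕ)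
    (x : Fin n → Fin p → ℝ) : Prop where
  head_le : ∀ k ≤ p, ∀ u : EuclideanSpace ℝ (Fin n),
    ∑ i, headInv p lam k i * rotScore Q x u i ^ 2 ≤ 48 * (n + k) * ‖u‖ ^ 2
  tail_le : ∀ k ≤ p, ∀ u : EuclideanSpace ℝ (Fin n),
    ∑ i, tailInd p k i * rotScore Q x u i ^ 2
      ≤ (8 * tailSum p lam k + 48 * (n + k) * tailTop p lam k) * ‖u‖ ^ 2
  le_tail : ∀ u : EuclideanSpace ℝ (Fin n),
    tailSum p lam κ / 16 * ‖u‖ ^ 2 ≤ ∑ i, tailInd p κ i * rotScore Q x u i ^ 2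

lemma tailInd_nonneg (k : ℕ) (i : Fin p) : 0 ≤ tailInd p k i := by
  unfold tailInd; split_ifs <;> norm_num

lemma headInv_nonneg (hlam : ∀ i : Fin p, 0 ≤ lam ((i : ℕ) + 1)) (k : ℕ) (i : Fin p) :
    0 ≤ headInv p lam k i := by
  unfold headInv
  split_ifs
  · exact inv_nonneg.2 (hlam i)
  · exact le_rfl

lemma headInv_mul_le (k : ℕ) (i : Fin p) :
    headInv p lam k i * lam ((i : ℕ) + 1) ≤ if (i : ℕ) < k then 1 else 0 := by
  unfold headInv
  split_ifs
  · exact inv_mul_le_one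
  · simp

lemma sum_headInv_mul_le (k : ℕ) :
    ∑ i : Fin p, headInv p lam k i * lam ((i : ℕ) + 1) ≤ k := by
  refine (Finset.sum_le_sum fun i _ => headInv_mul_le k i).trans ?_
  rw [Fin.sum_univ_eq_sum_range (fun i => if i < k then (1 : ℝ) else 0) p, Finset.sum_ite]
  simp only [Finset.sum_const, nsmul_eq_mul, mul_one, mul_zero, add_zero, Nat.cast_le]
  refine (Finset.card_le_card fun i hi => ?_).trans_eq (Finset.card_range k)
  simpa using (Finset.mem_filter.1 hi).2

lemma tailTop_nonneg (hlam : ∀ i : Fin p, 0 ≤ lam ((i : ℕ) + 1)) (k : ℕ) :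
    0 ≤ tailTop p lam k := by
  unfold tailTop
  split_ifs with h
  · exact hlam ⟨k, h⟩
  · exact le_rfl

lemma tailInd_mul_le (hlam : ∀ i : Fin p, 0 ≤ lam ((i : ℕ) + 1))
    (hmono : ∀ i j : Fin p, i ≤ j → lam ((j : ℕ) + 1) ≤ lam ((i : ℕ) + 1)) (k : ℕ) (i : Fin p) :
    tailInd p k i * lam ((i : ℕ) + 1) ≤ tailTop p lam k := by
  unfold tailInd
  split_ifs with h
  · have hk : k < p := h.trans_lt i.2
    rw [tailTop, if_pos hk, one_mul]
    exact hmono ⟨k, hk⟩ i h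
  · rw [zero_mul]
    exact tailTop_nonneg hlam k

lemma sum_exp_neg_le_two (m : ℕ) : ∑ k ∈ Finset.range m, Real.exp (-(k : ℝ)) ≤ 2 := by
  have h2 : Real.exp (-1) ≤ 1 / 2 := by
    rw [Real.exp_neg, one_div]
    have := Real.exp_one_gt_d9
    gcongr
    linarith
  calc ∑ k ∈ Finset.range m, Real.exp (-(k : ℝ)) ≤ ∑ k ∈ Finset.range m, (1 / 2 : ℝ) ^ k := by
        refine Finset.sum_le_sum fun k _ => ?_
        rw [show -(k : ℝ) = k * (-1) by ring, Real.exp_nat_mul]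
        gcongr
    _ ≤ 2 := sum_geometric_two_le m

lemma not_isGoodDesign_le (hQ : Q * Qᵀ = 1) (hlam : ∀ i : Fin p, 0 ≤ lam ((i : ℕ) + 1))
    (hmono : ∀ i j : Fin p, i ≤ j → lam ((j : ℕ) + 1) ≤ lam ((i : ℕ) + 1)) {κ : ℕ} (hκp : κ < p)
    (hκn : κ ≤ n) (hpos : 0 < lam (κ + 1)) (hrank : 288 * n * lam (κ + 1) ≤ tailSum p lam κ) :
    (Measure.pi fun _ : Fin n => mvGaussian p lam Q).real {x | ¬ IsGoodDesign lam Q κ x}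
      ≤ 5 * Real.exp (-n) := by
  set ν := Measure.pi fun _ : Fin n => mvGaussian p lam Q with hν
  let H : ℕ → Set (Fin n → Fin p → ℝ) := fun k => {x | ∃ u : EuclideanSpace ℝ (Fin n),
    (8 * (k : ℝ) + 16 * 1 * (3 * n + k)) * ‖u‖ ^ 2
      < ∑ i, headInv p lam k i * rotScore Q x u i ^ 2}
  let B : ℕ → Set (Fin n → Fin p → ℝ) := fun k => {x | ∃ u : EuclideanSpace ℝ (Fin n),
    (8 * tailSum p lam k + 16 * tailTop p lam k * (3 * n + k)) * ‖u‖ ^ 2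
      < ∑ i, tailInd p k i * rotScore Q x u i ^ 2}
  let D : Set (Fin n → Fin p → ℝ) := {x | (∃ u : EuclideanSpace ℝ (Fin n),
      ∑ i, tailInd p κ i * rotScore Q x u i ^ 2 < tailSum p lam κ / 16 * ‖u‖ ^ 2) ∧
    ∀ u : EuclideanSpace ℝ (Fin n),
      ∑ i, tailInd p κ i * rotScore Q x u i ^ 2 ≤ 9 * tailSum p lam κ * ‖u‖ ^ 2}
  have hexp : ∀ k : ℕ, Real.exp (2 * n) * Real.exp (-(3 * n + k))
      = Real.exp (-n) * Real.exp (-(k : ℝ)) := fun k => by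
    rw [← Real.exp_add, ← Real.exp_add]
    congr 1
    ring
  have hH : ∀ k, ν.real (H k) ≤ Real.exp (-n) * Real.exp (-(k : ℝ)) := fun k => by
    rw [← hexp]
    refine rotScore_uniform_upper hQ hlam (headInv_nonneg hlam k) zero_le_one (by positivity)
      (fun i => (headInv_mul_le k i).trans ?_) (sum_headInv_mul_le k)
    split_ifs <;> norm_num
  have hB : ∀ k, ν.real (B k) ≤ Real.exp (-n) * Real.exp (-(k : ℝ)) := fun k => by
    rw [← hexp]
    exact rotScore_uniform_upper hQ hlam (tailInd_nonneg k) (tailTop_nonneg hlam k)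
      (by positivity) (tailInd_mul_le hlam hmono k) le_rfl
  have htop : tailTop p lam κ = lam (κ + 1) := if_pos hκp
  have hD : ν.real D ≤ Real.exp (-n) := by
    refine (rotScore_uniform_lower hQ hlam (tailInd_nonneg κ) hpos
      (fun i => htop ▸ tailInd_mul_le hlam hmono κ i) rfl).trans ?_
    rw [← Real.exp_add]
    apply Real.exp_le_exp.2
    have : 9 * (n : ℝ) ≤ tailSum p lam κ / (32 * lam (κ + 1)) := by
      rw [le_div_iff₀ (by positivity)]
      linarith
    change 8 * (n : ℝ) + -(tailSum p lam κ / (32 * lam (κ + 1))) ≤ _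
    linarith
  have hsub : {x | ¬ IsGoodDesign lam Q κ x}
      ⊆ ((⋃ k ∈ Finset.range (p + 1), H k) ∪ ⋃ k ∈ Finset.range (p + 1), B k) ∪ D := by
    intro x hx
    by_contra hcon
    simp only [Set.mem_union, Set.mem_iUnion, Finset.mem_range, not_or, not_exists,
      Nat.lt_succ_iff] at hcon
    obtain ⟨⟨hxH, hxB⟩, hxD⟩ := hcon
    have htail : ∀ k ≤ p, ∀ u : EuclideanSpace ℝ (Fin n),
        ∑ i, tailInd p k i * rotScore Q x u i ^ 2
          ≤ (8 * tailSum p lam k + 48 * (n + k) * tailTop p lam k) * ‖u‖ ^ 2 := by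
      intro k hk u
      have h1 := hxB k hk
      simp only [B, Set.mem_ofPred_eq, not_exists, not_lt] at h1
      refine (h1 u).trans ?_
      gcongr ?_ * _
      have := mul_nonneg (tailTop_nonneg hlam k) (Nat.cast_nonneg (α := ℝ) k)
      linarith
    refine hx ⟨fun k hk u => ?_, htail, fun u => ?_⟩
    · have h1 := hxH k hk
      simp only [H, Set.mem_ofPred_eq, not_exists, not_lt] at h1
      refine (h1 u).trans ?_
      gcongr ?_ * _
      have := Nat.cast_nonneg (α := ℝ) k
      linarith
    · by_contra! hlow
      refine hxD ⟨⟨u, hlow⟩, fun u' => (htail κ hκp.le u').trans ?_⟩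
      gcongr ?_ * _
      rw [htop]
      have h1 : (κ : ℝ) ≤ n := by exact_mod_cast hκn
      have h2 : (κ : ℝ) * lam (κ + 1) ≤ n * lam (κ + 1) := by gcongr
      have h3 : 0 ≤ (n : ℝ) * lam (κ + 1) := by positivity
      linarith
  have hsum : ∀ A : ℕ → Set (Fin n → Fin p → ℝ),
      (∀ k, ν.real (A k) ≤ Real.exp (-n) * Real.exp (-(k : ℝ))) →
      ν.real (⋃ k ∈ Finset.range (p + 1), A k) ≤ 2 * Real.exp (-n) := by
    intro A hA
    calc _ ≤ ∑ k ∈ Finset.range (p + 1), ν.real (A k) := measureReal_biUnion_finset_le _ _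
      _ ≤ ∑ k ∈ Finset.range (p + 1), Real.exp (-n) * Real.exp (-(k : ℝ)) :=
        Finset.sum_le_sum fun k _ => hA k
      _ ≤ _ := by
        rw [← Finset.mul_sum, mul_comm]
        gcongr
        exact sum_exp_neg_le_two _
  have h1 := measureReal_mono (μ := ν) hsub (measure_ne_top _ _)
  have h2 := measureReal_union_le (μ := ν)
    ((⋃ k ∈ Finset.range (p + 1), H k) ∪ ⋃ k ∈ Finset.range (p + 1), B k) D
  have h3 := measureReal_union_le (μ := ν) (⋃ k ∈ Finset.range (p + 1), H k)
    (⋃ k ∈ Finset.range (p + 1), B k)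
  have h4 := hsum H hH
  have h5 := hsum B hB
  linarith

end Good

/-! ### Deterministic argument on a good design -/

section Deterministic

variable {n p : ℕ} {lam : ℕ → ℝ} {Q : Matrix (Fin p) (Fin p) ℝ} {x : Fin n → Fin p → ℝ} {κ : ℕ}

lemma enorm2_nonneg {m : ℕ} (v : Fin m → ℝ) : 0 ≤ enorm2 v := Real.sqrt_nonneg _

lemma enorm2_sq {m : ℕ} (v : Fin m → ℝ) : enorm2 v ^ 2 = ∑ i, v i ^ 2 :=
  Real.sq_sqrt (by positivity)

lemma enorm2_eq_norm {m : ℕ} (v : Fin m → ℝ) : enorm2 v = ‖WithLp.toLp 2 v‖ := by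
  simp [enorm2, EuclideanSpace.norm_eq]

lemma enorm2_add_le {m : ℕ} (v w : Fin m → ℝ) : enorm2 (v + w) ≤ enorm2 v + enorm2 w := by
  simp only [enorm2_eq_norm, WithLp.toLp_add]
  exact norm_add_le _ _

lemma enorm2_sub_le {m : ℕ} (v w : Fin m → ℝ) : enorm2 (v - w) ≤ enorm2 v + enorm2 w := by
  simp only [enorm2_eq_norm, WithLp.toLp_sub]
  exact norm_sub_le _ _

lemma transpose_mulVec_dotProduct (hQ : Q * Qᵀ = 1) (w d : Fin p → ℝ) :
    (Qᵀ *ᵥ w) ⬝ᵥ (Qᵀ *ᵥ d) = w ⬝ᵥ d := by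
  rw [Matrix.dotProduct_mulVec, Matrix.vecMul_transpose, Matrix.mulVec_mulVec, hQ,
    Matrix.one_mulVec]

lemma sum_rotScore_mul (hQ : Q * Qᵀ = 1) (u : EuclideanSpace ℝ (Fin n)) (d : Fin p → ℝ) :
    ∑ i, rotScore Q x u i * (Qᵀ *ᵥ d) i = ∑ a, u a * ∑ j, x a j * d j := by
  change (Qᵀ *ᵥ ∑ a, u a • x a) ⬝ᵥ (Qᵀ *ᵥ d) = ∑ a, u a * (x a ⬝ᵥ d)
  rw [transpose_mulVec_dotProduct hQ, sum_dotProduct]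
  simp only [smul_dotProduct, smul_eq_mul]

lemma predNorm_sq (hlam : ∀ i : Fin p, 0 ≤ lam ((i : ℕ) + 1)) (d : Fin p → ℝ) :
    predNorm (Q * Matrix.diagonal (fun i : Fin p => lam ((i : ℕ) + 1)) * Qᵀ) d ^ 2
      = ∑ i : Fin p, lam ((i : ℕ) + 1) * (Qᵀ *ᵥ d) i ^ 2 := by
  have h : d ⬝ᵥ (Q * Matrix.diagonal (fun i : Fin p => lam ((i : ℕ) + 1)) * Qᵀ) *ᵥ d
      = ∑ i : Fin p, lam ((i : ℕ) + 1) * (Qᵀ *ᵥ d) i ^ 2 := by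
    rw [← Matrix.mulVec_mulVec, ← Matrix.mulVec_mulVec, Matrix.dotProduct_mulVec,
      ← Matrix.mulVec_transpose]
    simp only [dotProduct, Matrix.mulVec_diagonal]
    exact Finset.sum_congr rfl fun i _ => by ring
  rw [predNorm, h, Real.sq_sqrt]
  exact Finset.sum_nonneg fun i _ => mul_nonneg (hlam i) (sq_nonneg _)

/-- On a good design every vector is interpolated by a vector of controlled norm. -/
lemma IsGoodDesign.exists_interp (hx : IsGoodDesign lam Q κ x) (hQ : Q * Qᵀ = 1)
    (hr : 0 < tailSum p lam κ) (ξ : Fin n → ℝ) :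
    ∃ h : Fin p → ℝ, (∀ a, ∑ j, x a j * h j = ξ a) ∧
      enorm2 h ≤ 4 * enorm2 ξ / Real.sqrt (tailSum p lam κ) := by
  let M : Matrix (Fin n) (Fin p) ℝ := Matrix.of x
  have hw : ∀ u : Fin n → ℝ, Mᵀ *ᵥ u = ∑ a, u a • x a := fun u => by
    ext j
    simp [M, Matrix.mulVec, dotProduct, mul_comm]
  have hlow : ∀ u : Fin n → ℝ, tailSum p lam κ / 16 * enorm2 u ^ 2 ≤ enorm2 (Mᵀ *ᵥ u) ^ 2 := by
    intro u
    rw [enorm2_eq_norm u, enorm2_sq, hw, ← sum_sq_transpose_mulVec hQ]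
    refine (hx.le_tail (WithLp.toLp 2 u)).trans (Finset.sum_le_sum fun i _ => ?_)
    refine mul_le_of_le_one_left (sq_nonneg _) ?_
    unfold tailInd
    split_ifs <;> norm_num
  have hquad : ∀ u : Fin n → ℝ, enorm2 (Mᵀ *ᵥ u) ^ 2 = u ⬝ᵥ ((M * Mᵀ) *ᵥ u) := fun u => by
    rw [enorm2_sq, ← Matrix.mulVec_mulVec, Matrix.dotProduct_mulVec, ← Matrix.mulVec_transpose]
    simp [dotProduct, sq]
  have hinj : Function.Injective (M * Mᵀ).mulVecLin := by
    rw [injective_iff_map_eq_zero]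
    intro u hu
    have h1 := hlow u
    rw [hquad, ← Matrix.mulVecLin_apply, hu, dotProduct_zero] at h1
    have h2 : enorm2 u ^ 2 ≤ 0 := by
      by_contra! h
      exact absurd h1 (not_le.2 (by positivity))
    rw [enorm2_sq] at h2
    funext a
    have h3 := (Finset.sum_eq_zero_iff_of_nonneg fun i _ => sq_nonneg (u i)).1
      (le_antisymm h2 (by positivity)) a (Finset.mem_univ a)
    simpa using h3
  obtain ⟨u, hu⟩ := LinearMap.injective_iff_surjective.1 hinj ξ
  rw [Matrix.mulVecLin_apply] at hu
  refine ⟨Mᵀ *ᵥ u, fun a => ?_, ?_⟩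
  · rw [← hu, ← Matrix.mulVec_mulVec]
    rfl
  · have h1 := hlow u
    have hcs : enorm2 (Mᵀ *ᵥ u) ^ 2 ≤ enorm2 u * enorm2 ξ := by
      rw [hquad, hu]
      exact Real.sum_mul_le_sqrt_mul_sqrt _ _ _
    have hs := Real.sqrt_pos.2 hr
    have hs2 := Real.sq_sqrt hr.le
    set s := Real.sqrt (tailSum p lam κ)
    set h := enorm2 (Mᵀ *ᵥ u)
    have hh : 0 ≤ h := enorm2_nonneg _
    have hu0 := enorm2_nonneg u
    have hξ := enorm2_nonneg ξ
    rw [← hs2] at h1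
    have h2 : s * enorm2 u ≤ 4 * h := by
      refine abs_le_of_sq_le_sq' ?_ (by positivity) |>.2
      linarith
    rw [le_div_iff₀ hs]
    rcases hh.eq_or_lt with h0 | h0
    · rw [← h0]; simpa using hξ
    · refine le_of_mul_le_mul_left ?_ h0
      calc h * (h * s) = h ^ 2 * s := by ring
        _ ≤ enorm2 u * enorm2 ξ * s := by gcongr
        _ = (s * enorm2 u) * enorm2 ξ := by ring
        _ ≤ 4 * h * enorm2 ξ := by gcongr
        _ = _ := by ring

lemma IsGoodDesign.enorm2_sub_le (hx : IsGoodDesign lam Q κ x) (hQ : Q * Qᵀ = 1)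
    (hr : 0 < tailSum p lam κ) {ξ : Fin n → ℝ} {β b : Fin p → ℝ}
    (hb : IsMinInterp x (fun i => (∑ j, x i j * β j) + ξ i) b) :
    enorm2 (b - β) ≤ 2 * (enorm2 β + 4 * enorm2 ξ / Real.sqrt (tailSum p lam κ)) := by
  obtain ⟨h, hh, hle⟩ := hx.exists_interp hQ hr ξ
  have h1 := hb.2 (β + h) fun i => by
    simp only [Pi.add_apply, mul_add, Finset.sum_add_distrib, hh]
  have h2 := _root_.enorm2_sub_le b β
  have h3 := enorm2_add_le β h
  have h4 : 0 ≤ 4 * enorm2 ξ / Real.sqrt (tailSum p lam κ) :=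
    div_nonneg (mul_nonneg (by norm_num) (enorm2_nonneg ξ)) (Real.sqrt_nonneg _)
  linarith

lemma weighted_cauchy_schwarz {m : ℕ} {v w a b : Fin m → ℝ} (hv : ∀ i, 0 ≤ v i)
    (hw : ∀ i, 0 ≤ w i) {A B : ℝ} (hA : ∑ i, v i * a i ^ 2 ≤ A) (hB : ∑ i, w i * b i ^ 2 ≤ B) :
    (∑ i, Real.sqrt (v i * w i) * (a i * b i)) ^ 2 ≤ A * B := by
  have hA0 : 0 ≤ ∑ i, v i * a i ^ 2 :=
    Finset.sum_nonneg fun i _ => mul_nonneg (hv i) (sq_nonneg _)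
  have hB0 : 0 ≤ ∑ i, w i * b i ^ 2 :=
    Finset.sum_nonneg fun i _ => mul_nonneg (hw i) (sq_nonneg _)
  have h := Finset.sum_mul_sq_le_sq_mul_sq Finset.univ (fun i => Real.sqrt (v i) * a i)
    (fun i => Real.sqrt (w i) * b i)
  simp only [mul_pow, Real.sq_sqrt (hv _), Real.sq_sqrt (hw _)] at h
  calc _ = (∑ i, Real.sqrt (v i) * a i * (Real.sqrt (w i) * b i)) ^ 2 := by
        congr 1
        refine Finset.sum_congr rfl fun i _ => ?_
        rw [Real.sqrt_mul (hv i)]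
        ring
    _ ≤ _ := h.trans (mul_le_mul hA hB hB0 (hA0.trans hA))

/-- Splitting the identity `‖ξ‖² = ⟪Xᵀξ, d⟫` at the index `k`. -/
lemma IsGoodDesign.noise_le (hx : IsGoodDesign lam Q κ x) (hQ : Q * Qᵀ = 1)
    (hlam : ∀ i : Fin p, 0 ≤ lam ((i : ℕ) + 1)) {k : ℕ} (hk : k ≤ p)
    (hkpos : ∀ i : Fin p, (i : ℕ) < k → 0 < lam ((i : ℕ) + 1)) {ξ : Fin n → ℝ} {d : Fin p → ℝ}
    (hd : ∀ a, ∑ j, x a j * d j = ξ a) :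
    enorm2 ξ ^ 2 ≤
      2 * (48 * (n + k) * predNorm
          (Q * Matrix.diagonal (fun i : Fin p => lam ((i : ℕ) + 1)) * Qᵀ) d ^ 2)
        + 2 * ((8 * tailSum p lam k + 48 * (n + k) * tailTop p lam k) * enorm2 d ^ 2) := by
  set u : EuclideanSpace ℝ (Fin n) := WithLp.toLp 2 ξ
  set e := Qᵀ *ᵥ d with he
  set a := rotScore Q x u
  have hu : ‖u‖ = enorm2 ξ := (enorm2_eq_norm ξ).symm
  have hhead := weighted_cauchy_schwarz (a := a) (b := e) (headInv_nonneg hlam k) hlam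
    (hx.head_le k hk u) (predNorm_sq (Q := Q) hlam d).ge
  have htail := weighted_cauchy_schwarz (a := a) (b := e) (w := fun _ => 1)
    (B := enorm2 d ^ 2) (tailInd_nonneg k) (fun _ => zero_le_one) (hx.tail_le k hk u)
    (by simp only [one_mul]; rw [enorm2_sq, he, sum_sq_transpose_mulVec hQ])
  have hsplit : enorm2 ξ ^ 2
      = ∑ i : Fin p, Real.sqrt (headInv p lam k i * lam ((i : ℕ) + 1)) * (a i * e i)
        + ∑ i : Fin p, Real.sqrt (tailInd p k i * 1) * (a i * e i) := by
    have h1 := sum_rotScore_mul (x := x) hQ u d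
    simp only [hd] at h1
    rw [enorm2_sq, ← Finset.sum_add_distrib]
    calc ∑ i, ξ i ^ 2 = ∑ i, a i * e i := by
          rw [h1]
          exact Finset.sum_congr rfl fun i _ => sq _
      _ = _ := by
          refine Finset.sum_congr rfl fun i _ => ?_
          by_cases hi : (i : ℕ) < k
          · simp [headInv, tailInd, hi, not_le.2 hi, inv_mul_cancel₀ (hkpos i hi).ne']
          · simp [headInv, tailInd, hi, not_lt.1 hi]
  rw [hu] at hhead htail
  set F := ∑ i : Fin p, Real.sqrt (headInv p lam k i * lam ((i : ℕ) + 1)) * (a i * e i)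
  set T := ∑ i : Fin p, Real.sqrt (tailInd p k i * 1) * (a i * e i)
  rcases (enorm2_nonneg ξ).eq_or_lt with h0 | h0
  · rw [← h0, zero_pow two_ne_zero]
    have := tailTop_nonneg hlam k
    have : 0 ≤ tailSum p lam k :=
      Finset.sum_nonneg fun i _ => mul_nonneg (tailInd_nonneg k i) (hlam i)
    positivity
  · have hs : 0 < enorm2 ξ ^ 2 := by positivity
    refine le_of_mul_le_mul_left ?_ hs
    calc enorm2 ξ ^ 2 * enorm2 ξ ^ 2 = (F + T) ^ 2 := by rw [hsplit]; ring
      _ ≤ 2 * (F ^ 2 + T ^ 2) := add_sq_le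
      _ ≤ _ := by linarith

/-- The index at which `λ_i ρ²` falls below the level `s²`. -/
lemma exists_cutoff (hlam : ∀ i : Fin p, 0 ≤ lam ((i : ℕ) + 1))
    (hmono : ∀ i j : Fin p, i ≤ j → lam ((j : ℕ) + 1) ≤ lam ((i : ℕ) + 1)) (ρ s : ℝ) :
    ∃ k ≤ p, (∀ i : Fin p, (i : ℕ) < k → 0 < lam ((i : ℕ) + 1)) ∧
      tailTop p lam k * ρ ^ 2 ≤ s ^ 2 ∧
      k * s ^ 2 + tailSum p lam k * ρ ^ 2
        ≤ ∑ i : Fin p, min (lam ((i : ℕ) + 1) * ρ ^ 2) (s ^ 2) := by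
  have hex : ∃ k, p ≤ k ∨ lam (k + 1) * ρ ^ 2 ≤ s ^ 2 := ⟨p, Or.inl le_rfl⟩
  set k := Nat.find hex
  have hkp : k ≤ p := Nat.find_min' hex (Or.inl le_rfl)
  have hlt : ∀ i : Fin p, (i : ℕ) < k → s ^ 2 < lam ((i : ℕ) + 1) * ρ ^ 2 := fun i hi => by
    have := Nat.find_min hex hi
    push Not at this
    exact this.2
  have htop : tailTop p lam k * ρ ^ 2 ≤ s ^ 2 := by
    unfold tailTop
    split_ifs with h
    · exact (Nat.find_spec hex).resolve_left h.not_ge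
    · rw [zero_mul]; positivity
  refine ⟨k, hkp, fun i hi => (hlam i).lt_of_ne fun h0 => ?_, htop, ?_⟩
  · have := hlt i hi
    rw [← h0, zero_mul] at this
    exact absurd this (not_lt.2 (sq_nonneg s))
  · have hcard : (k : ℝ) * s ^ 2 = ∑ i : Fin p, if (i : ℕ) < k then s ^ 2 else 0 := by
      rw [Fin.sum_univ_eq_sum_range (fun i => if i < k then s ^ 2 else 0) p, ← Finset.sum_filter,
        show Finset.filter (· < k) (Finset.range p) = Finset.range k by
          ext i; simp only [Finset.mem_filter, Finset.mem_range]; lia]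
      simp
    rw [hcard, tailSum, Finset.sum_mul, ← Finset.sum_add_distrib]
    refine Finset.sum_le_sum fun i _ => ?_
    by_cases hi : (i : ℕ) < k
    · simp [tailInd, hi, not_le.2 hi, (hlt i hi).le]
    · have h1 : lam ((i : ℕ) + 1) * ρ ^ 2 ≤ s ^ 2 := by
        have h2 := tailInd_mul_le hlam hmono k i
        rw [tailInd, if_pos (not_lt.1 hi), one_mul] at h2
        exact (mul_le_mul_of_nonneg_right h2 (sq_nonneg ρ)).trans htop
      simp [tailInd, hi, not_lt.1 hi, h1]

lemma IsGoodDesign.min_rbar_le (hx : IsGoodDesign lam Q κ x) (hQ : Q * Qᵀ = 1)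
    (hlam : ∀ i : Fin p, 0 ≤ lam ((i : ℕ) + 1))
    (hmono : ∀ i j : Fin p, i ≤ j → lam ((j : ℕ) + 1) ≤ lam ((i : ℕ) + 1)) (hn : 0 < n)
    {γ : ℝ} (hγ : γ ≤ 1 / 2000) {ξ : Fin n → ℝ} {d : Fin p → ℝ} {ρ : ℝ}
    (hd : ∀ a, ∑ j, x a j * d j = ξ a) (hdρ : enorm2 d ≤ 2 * ρ) :
    min (rbar p lam γ ρ (enorm2 ξ) ^ 2) (1 / 2000 * enorm2 ξ ^ 2 / n)
      ≤ predNorm (Q * Matrix.diagonal (fun i : Fin p => lam ((i : ℕ) + 1)) * Qᵀ) d ^ 2 := by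
  by_contra! hcon
  set t := predNorm (Q * Matrix.diagonal (fun i : Fin p => lam ((i : ℕ) + 1)) * Qᵀ) d with ht
  have ht0 : 0 ≤ t := Real.sqrt_nonneg _
  have hn' : (0 : ℝ) < n := by exact_mod_cast hn
  have hs0 := enorm2_nonneg ξ
  obtain ⟨hcon1, hcon2⟩ := lt_min_iff.1 hcon
  have hrb : t < rbar p lam γ ρ (enorm2 ξ) :=
    lt_of_pow_lt_pow_left₀ 2 (Real.sSup_nonneg fun r hr => hr.1.le) hcon1
  have hne : {r : ℝ | 0 < r ∧ ∑ i : Fin p, min (lam ((i : ℕ) + 1) * ρ ^ 2) (r ^ 2)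
      ≤ γ * enorm2 ξ ^ 2}.Nonempty := by
    rw [Set.nonempty_iff_ne_empty]
    intro h
    rw [rbar, h, Real.sSup_empty] at hrb
    exact absurd hrb (not_lt.2 ht0)
  obtain ⟨r₁, ⟨hr₁, hsum₁⟩, htr₁⟩ := exists_lt_of_lt_csSup hne hrb
  set v := 1 / 2000 * enorm2 ξ ^ 2 / n with hv
  have hv0 : 0 < v := (sq_nonneg t).trans_lt hcon2
  set s := min r₁ (Real.sqrt v) with hs
  have hspos : 0 < s := lt_min hr₁ (Real.sqrt_pos.2 hv0)
  have hts : t ^ 2 < s ^ 2 :=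
    pow_lt_pow_left₀ (lt_min htr₁ (Real.lt_sqrt_of_sq_lt hcon2)) ht0 two_ne_zero
  have hsv : n * s ^ 2 ≤ 1 / 2000 * enorm2 ξ ^ 2 := by
    have h1 : s ^ 2 ≤ v := by
      rw [← Real.sq_sqrt hv0.le]
      exact pow_le_pow_left₀ hspos.le (min_le_right _ _) 2
    rw [hv, le_div_iff₀ hn'] at h1
    linarith
  obtain ⟨k, hkp, hkpos, htop, hk⟩ := exists_cutoff hlam hmono ρ s
  have hsum : k * s ^ 2 + tailSum p lam k * ρ ^ 2 ≤ γ * enorm2 ξ ^ 2 := by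
    refine hk.trans (le_trans (Finset.sum_le_sum fun i _ => ?_) hsum₁)
    exact min_le_min_left _ (pow_le_pow_left₀ hspos.le (min_le_left _ _) 2)
  have hmain := hx.noise_le hQ hlam hkp hkpos hd
  rw [← ht] at hmain
  have hξ : 0 < enorm2 ξ ^ 2 := by
    by_contra! h
    have : v ≤ 0 := div_nonpos_of_nonpos_of_nonneg (by linarith) hn'.le
    linarith
  have hT : 0 ≤ tailTop p lam k := tailTop_nonneg hlam k
  have hS : 0 ≤ tailSum p lam k :=
    Finset.sum_nonneg fun i _ => mul_nonneg (tailInd_nonneg k i) (hlam i)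
  have hd2 : enorm2 d ^ 2 ≤ 4 * ρ ^ 2 := by
    have := pow_le_pow_left₀ (enorm2_nonneg d) hdρ 2
    linarith
  have h1 : (n + k : ℝ) * t ^ 2 ≤ (n + k) * s ^ 2 := by gcongr
  have h2 : (8 * tailSum p lam k + 48 * (n + k) * tailTop p lam k) * enorm2 d ^ 2
      ≤ (8 * tailSum p lam k + 48 * (n + k) * tailTop p lam k) * (4 * ρ ^ 2) := by gcongr
  have h3 : (n + k : ℝ) * (tailTop p lam k * ρ ^ 2) ≤ (n + k) * s ^ 2 := by gcongr
  have h4 : 0 ≤ tailSum p lam k * ρ ^ 2 := by positivity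
  have h5 : 0 ≤ (k : ℝ) * s ^ 2 := by positivity
  have h6 : γ * enorm2 ξ ^ 2 ≤ 1 / 2000 * enorm2 ξ ^ 2 := by gcongr
  linarith

lemma rsum_succ_eq_tailSum (p : ℕ) (lam : ℕ → ℝ) (κ : ℕ) :
    rsum p lam (κ + 1) = tailSum p lam κ := by
  have h : ∀ i : Fin p, tailInd p κ i * lam ((i : ℕ) + 1)
      = (fun j : ℕ => if κ ≤ j then lam (j + 1) else 0) i := fun i => by simp [tailInd]
  rw [rsum, tailSum, Finset.sum_congr rfl fun i _ => h i,
    Fin.sum_univ_eq_sum_range (fun j : ℕ => if κ ≤ j then lam (j + 1) else 0) p,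
    ← Finset.sum_filter]
  refine Finset.sum_nbij' (· - 1) (· + 1) ?_ ?_ ?_ ?_ ?_ <;>
    simp only [Finset.mem_Icc, Finset.mem_filter, Finset.mem_range]
  · intro i hi; lia
  · intro i hi; lia
  · intro i hi; lia
  · intro i hi; lia
  · intro i hi
    rw [Nat.sub_add_cancel (by lia)]

end Deterministic

/-- Theorem 3: in the model `Y = Xβ* + ξ` with `p ≥ n`, `k* ≤ c n`,
and rows of `X` conditionally on `ξ` i.i.d. `N(0,Σ)` (formalized as independence plus
the product Gaussian law), there exist constants `c₁, c₂, c₃ > 0` such that if `γ > 0`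
is small enough, with probability at least `1 - c₁ e^{-c₂ n}`,
`min(r̄(γ)², c₃‖ξ‖₂²/n) ≤ ‖Σ^{1/2}(β̂ - β*)‖₂²`. -/
theorem stmt9 :
    ∃ c0 > (0 : ℝ), ∃ c > (0 : ℝ),
    ∃ c1 > (0 : ℝ), ∃ c2 > (0 : ℝ), ∃ c3 > (0 : ℝ), ∃ γ0 > (0 : ℝ),
    ∀ γ : ℝ, 0 < γ → γ ≤ γ0 →
    ∀ (n p : ℕ), 0 < n → n ≤ p →
    ∀ (lam : ℕ → ℝ) (Porth Sig : Matrix (Fin p) (Fin p) ℝ),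
      (∀ k, 1 ≤ k → k ≤ p → 0 ≤ lam k) →
      (∀ j k, 1 ≤ j → j ≤ k → k ≤ p → lam k ≤ lam j) →
      Porth * Porthᵀ = 1 →
      Sig = Porth * Matrix.diagonal (fun i : Fin p => lam ((i : ℕ) + 1)) * Porthᵀ →
      n ≤ Sig.rank →
    ∀ (Ω : Type) (_ : MeasurableSpace Ω) (P : Measure Ω), IsProbabilityMeasure P →
    ∀ (X : Ω → Fin n → Fin p → ℝ) (ξ : Ω → Fin n → ℝ) (βstar : Fin p → ℝ)
      (βhat : Ω → Fin p → ℝ),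
      IndepFun X ξ P →
      Measure.map X P = (Measure.pi fun _ : Fin n => mvGaussian p lam Porth) →
      (∀ᵐ ω ∂P, IsMinInterp (X ω)
        (fun i => (∑ j, X ω i j * βstar j) + ξ ω i) (βhat ω)) →
      (kstarSet p lam c0 n).Nonempty → (kstar p lam c0 n : ℝ) ≤ c * n →
      ENNReal.ofReal (1 - c1 * Real.exp (-c2 * n)) ≤
        P {ω | min (rbar p lam γ (rho p lam c0 n βstar (enorm2 (ξ ω)))
                      (enorm2 (ξ ω)) ^ 2)
                   (c3 * enorm2 (ξ ω) ^ 2 / n) ≤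
               predNorm Sig (fun j => βhat ω j - βstar j) ^ 2} := by
  refine ⟨288, by norm_num, 1, one_pos, 5, by norm_num, 1, one_pos, 1 / 2000, by norm_num,
    1 / 2000, by norm_num, ?_⟩
  intro γ _ hγ n p hn _ lam Q Sig hlam0 hmono0 hQ hSig _ Ω _ P _ X ξ βstar βhat _ hX hint hne hkn
  have hn' : (0 : ℝ) < n := by exact_mod_cast hn
  have hlam : ∀ i : Fin p, 0 ≤ lam ((i : ℕ) + 1) := fun i => hlam0 _ (by lia) (by lia)
  have hmono : ∀ i j : Fin p, i ≤ j → lam ((j : ℕ) + 1) ≤ lam ((i : ℕ) + 1) := fun i j hij =>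
    hmono0 _ _ (by lia) (Nat.succ_le_succ hij) (by lia)
  obtain ⟨hk1, hkp, hkr⟩ := Nat.sInf_mem hne
  obtain ⟨κ, hκ⟩ : ∃ κ, kstar p lam 288 n = κ + 1 := Nat.exists_eq_add_one.2 hk1
  change kstar p lam 288 n ≤ p at hkp
  change _ ≤ rsum p lam (kstar p lam 288 n) / lam (kstar p lam 288 n) at hkr
  rw [hκ, rsum_succ_eq_tailSum] at hkr
  have hκn : κ ≤ n := by
    rw [hκ, one_mul] at hkn
    have : κ + 1 ≤ n := by exact_mod_cast hkn
    lia
  rw [hκ] at hkp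
  have hpos : 0 < lam (κ + 1) := by
    refine (hlam ⟨κ, hkp⟩).lt_of_ne fun h0 => ?_
    simp only at h0
    rw [← h0, div_zero] at hkr
    linarith
  have hrank : 288 * n * lam (κ + 1) ≤ tailSum p lam κ := (le_div_iff₀ hpos).1 hkr
  have hr : 0 < tailSum p lam κ := lt_of_lt_of_le (by positivity) hrank
  have hbad := not_isGoodDesign_le hQ hlam hmono hkp hκn hpos hrank
  have hXm : AEMeasurable X P := AEMeasurable.of_map_ne_zero (by
    rw [hX]
    exact IsProbabilityMeasure.ne_zero _)
  set good := {ω | min (rbar p lam γ (rho p lam 288 n βstar (enorm2 (ξ ω))) (enorm2 (ξ ω)) ^ 2)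
    (1 / 2000 * enorm2 (ξ ω) ^ 2 / n) ≤ predNorm Sig (fun j => βhat ω j - βstar j) ^ 2} with hgood
  have hcompl : P goodᶜ ≤ ENNReal.ofReal (5 * Real.exp (-n)) := by
    calc P goodᶜ ≤ P (X ⁻¹' {x | ¬ IsGoodDesign lam Q κ x}) := by
          refine measure_mono_ae ?_
          filter_upwards [hint] with ω hω hbadω
          change ¬ IsGoodDesign lam Q κ (X ω)
          intro hgd
          refine hbadω ?_
          simp only [hgood, Set.mem_ofPred_eq]
          rw [hSig]
          refine hgd.min_rbar_le hQ hlam hmono hn hγ (fun a => ?_) ?_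
          · simp only [mul_sub, Finset.sum_sub_distrib, hω.1 a]
            ring
          · rw [rho, hκ, rsum_succ_eq_tailSum]
            exact hgd.enorm2_sub_le hQ hr hω
      _ ≤ P.map X {x | ¬ IsGoodDesign lam Q κ x} := Measure.le_map_apply hXm _
      _ ≤ _ := by
          rw [hX, ← ofReal_measureReal]
          exact ENNReal.ofReal_le_ofReal hbad
  have h1 : 1 ≤ P good + P goodᶜ := by
    rw [← measure_univ (μ := P)]
    exact measure_univ_le_add_compl good
  rw [ENNReal.ofReal_sub _ (by positivity), ENNReal.ofReal_one, neg_one_mul]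
  exact tsub_le_iff_right.2 (h1.trans (by gcongr))
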